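/- For every real z > 0, 2 ∫₀^∞ x / ((e^{2πx} + 1)(x² + z²)) dx = ψ(z + 1/2) − log z, where ψ is the digamma function. -/

import Mathlib

open Real MeasureTheory Filter

/-- Hurwitz zeta function ζ(s, a) for real a > 0, via analytic continuation. -/
noncomputable def hurwitzZetaReal (s : ℂ) (a : ℝ) : ℂ :=
  HurwitzZeta.hurwitzZeta (a : UnitAddCircle) s -
    ∑ k ∈ Finset.range (⌈a⌉₊ - 1), ((a - (⌈a⌉₊ - 1) + k : ℝ) : ℂ) ^ (-s)

/-- ζ'(-1, a): derivative of the Hurwitz zeta function w.r.t. s at s = -1. -/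
noncomputable def hurwitzZetaDerivNegOne (a : ℝ) : ℂ :=
  deriv (fun s => hurwitzZetaReal s a) (-1)

/-- Logarithm of the Glaisher–Kinkelin constant: log A = 1/12 - ζ'(-1). -/
noncomputable def logA : ℂ := 1 / 12 - deriv riemannZeta (-1)

/-- log G(z+1) for z > 0, via log G(z+1) = z log Γ(z) + ζ'(-1) - ζ'(-1, z). -/
noncomputable def logBarnesG1p (z : ℝ) : ℂ :=
  z * Real.log (Real.Gamma z) + deriv riemannZeta (-1) - hurwitzZetaDerivNegOne z

/-- log G(x) for x > 0, via the recurrence G(z+1) = Γ(z) G(z) on (0, 1]. -/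
noncomputable def logBarnesG (x : ℝ) : ℂ :=
  if x ≤ 1 then logBarnesG1p x - Real.log (Real.Gamma x) else logBarnesG1p (x - 1)

/-- The Barnes G-function (for positive real argument). -/
noncomputable def barnesG (x : ℝ) : ℂ := Complex.exp (logBarnesG x)

/-- The digamma function ψ = (log Γ)'. -/
noncomputable def digamma (x : ℝ) : ℝ := deriv (fun t => Real.log (Real.Gamma t)) x

/-- The trigamma function ψ⁽¹⁾ = (log Γ)''. -/
noncomputable def trigamma (x : ℝ) : ℝ :=
  deriv (deriv (fun t => Real.log (Real.Gamma t))) x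

/-- The Clausen function Cl₂(x) = ∑_{k ≥ 1} sin(k x) / k². -/
noncomputable def clausen2 (x : ℝ) : ℝ := ∑' k : ℕ, Real.sin ((k + 1) * x) / (k + 1) ^ 2

/-- Catalan's constant. -/
noncomputable def catalanConst : ℝ := ∑' k : ℕ, (-1 : ℝ) ^ k / (2 * (k : ℝ) + 1) ^ 2

/-!
The partial fractions of `π tanh (πx) = π (1 - 2 / (exp (2πx) + 1))`, integrated termwise against
`x / (x² + a²) - x / (x² + b²)`, show that `φ z = 2 ∫ x / ((exp (2πx) + 1) (x² + z²)) + log z`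
satisfies `φ b - φ a = ∑ₖ (1 / (a + k + 1/2) - 1 / (b + k + 1/2))`. For `b = a + 1` the series
telescopes, so `φ z` and `ψ (z + 1/2)` obey the same recurrence; both are `log z + o(1)` at
infinity, hence they agree.
-/

/-- The integrand of the analogue, with weight `1 / (exp (2πx) + 1)` in place of
`1 / (exp (2πx) - 1)`, of Binet's formula for `digamma z - log z`. -/
noncomputable def binetKernel (z x : ℝ) : ℝ :=
  x / ((Real.exp (2 * π * x) + 1) * (x ^ 2 + z ^ 2))

lemma hasSum_cotTerm {w : ℂ} (hw : w ∈ Complex.integerComplement) :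
    HasSum (cotTerm w) (π * Complex.cot (π * w) - 1 / w) :=
  (summable_cotTerm hw).hasSum_iff_tendsto_nat.2 (tendsto_logDeriv_euler_cot_sub hw)

lemma cot_two_mul {w : ℂ} (hw : Complex.sin (2 * w) ≠ 0) :
    Complex.cot (2 * w) = (Complex.cot w - Complex.tan w) / 2 := by
  rw [Complex.sin_two_mul] at hw
  have hsin : Complex.sin w ≠ 0 := fun h => hw (by simp [h])
  have hcos : Complex.cos w ≠ 0 := fun h => hw (by simp [h])
  rw [Complex.cot, Complex.cot, Complex.tan, Complex.sin_two_mul, Complex.cos_two_mul']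
  field_simp

-- The odd-indexed terms of the expansion of `cot (2πw)` form that of `cot (πw)`; what remains is
-- the expansion of `tan (πw)`.
lemma hasSum_cotTerm_two_mul_even {w : ℂ} (hw : 2 * w ∈ Complex.integerComplement) :
    HasSum (fun k : ℕ => cotTerm (2 * w) (2 * k)) (-(π / 2) * Complex.tan (π * w)) := by
  have hw' : w ∈ Complex.integerComplement := by
    rintro ⟨n, rfl⟩
    exact hw ⟨2 * n, by push_cast; rfl⟩
  have hodd : HasSum (fun k : ℕ => cotTerm (2 * w) (2 * k + 1))
      ((π * Complex.cot (π * w) - 1 / w) / 2) := by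
    convert! (hasSum_cotTerm hw').div_const 2 using 2 with k
    have hsub : 2 * w - ((2 * k + 1 : ℕ) + 1) = 2 * (w - (k + 1)) := by push_cast; ring
    have hadd : 2 * w + ((2 * k + 1 : ℕ) + 1) = 2 * (w + (k + 1)) := by push_cast; ring
    simp only [cotTerm, hsub, hadd, one_div, mul_inv]
    ring
  have heven : Summable fun k : ℕ => cotTerm (2 * w) (2 * k) :=
    (summable_cotTerm hw).comp_injective (mul_right_injective₀ two_ne_zero)
  have hsplit := (heven.hasSum.even_add_odd hodd).unique (hasSum_cotTerm hw)
  have hsin : Complex.sin (2 * (π * w)) ≠ 0 := by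
    rw [mul_left_comm]
    exact sin_pi_mul_ne_zero hw
  convert! heven.hasSum using 1
  rw [mul_left_comm (π : ℂ), cot_two_mul hsin] at hsplit
  linear_combination -hsplit

lemma hasSum_pi_mul_tanh (x : ℝ) :
    HasSum (fun k : ℕ => 2 * x / (x ^ 2 + ((k : ℝ) + 1 / 2) ^ 2)) (π * Real.tanh (π * x)) := by
  rcases eq_or_ne x 0 with rfl | hx
  · simp
  have hmem : 2 * (x * Complex.I) ∈ Complex.integerComplement := by
    rintro ⟨n, hn⟩
    exact hx (by simpa using (congrArg Complex.im hn).symm)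
  rw [← Complex.hasSum_ofReal]
  convert! (hasSum_cotTerm_two_mul_even hmem).mul_left (2 * Complex.I) using 2 with k
  · have hprod : (2 * (x * Complex.I) + ((2 * k : ℕ) + 1)) *
        (2 * (x * Complex.I) - ((2 * k : ℕ) + 1)) = -4 * ((x : ℂ) ^ 2 + (k + 1 / 2) ^ 2) := by
      push_cast
      linear_combination 4 * (x : ℂ) ^ 2 * Complex.I_sq
    rw [cotTerm_identity hmem, hprod]
    push_cast
    generalize (x : ℂ) ^ 2 + (k + 1 / 2) ^ 2 = D
    linear_combination 2 * (x : ℂ) / D * Complex.I_sq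
  · rw [← mul_assoc (π : ℂ), Complex.tan_mul_I]
    push_cast
    linear_combination (π : ℂ) * Complex.tanh (π * x) * Complex.I_sq

lemma tanh_eq_one_sub_two_div (x : ℝ) : Real.tanh x = 1 - 2 / (Real.exp (2 * x) + 1) := by
  rw [Real.tanh_eq, Real.exp_neg, two_mul, Real.exp_add]
  field_simp
  ring

lemma continuous_tanh : Continuous Real.tanh := by
  simp_rw [funext Real.tanh_eq_sinh_div_cosh]
  exact Real.continuous_sinh.div Real.continuous_cosh fun x => (Real.cosh_pos x).ne'

lemma hasSum_integral_pi_mul_tanh_mul {μ : Measure ℝ} {f : ℝ → ℝ} (hf : Integrable f μ) :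
    HasSum (fun k : ℕ => ∫ x, 2 * x / (x ^ 2 + ((k : ℝ) + 1 / 2) ^ 2) * f x ∂μ)
      (∫ x, π * Real.tanh (π * x) * f x ∂μ) := by
  have hbound (x : ℝ) : HasSum (fun k : ℕ => 2 * |x| / (x ^ 2 + ((k : ℝ) + 1 / 2) ^ 2) * |f x|)
      (π * Real.tanh (π * |x|) * |f x|) := by
    simpa only [sq_abs] using (hasSum_pi_mul_tanh |x|).mul_right |f x|
  refine hasSum_integral_of_dominated_convergence
    (fun k x => 2 * |x| / (x ^ 2 + ((k : ℝ) + 1 / 2) ^ 2) * |f x|) (fun k => ?_)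
    (fun k => .of_forall fun x => ?_) (.of_forall fun x => (hbound x).summable) ?_
    (.of_forall fun x => (hasSum_pi_mul_tanh x).mul_right (f x))
  · have hmeas : Measurable fun x : ℝ => 2 * x / (x ^ 2 + ((k : ℝ) + 1 / 2) ^ 2) := by fun_prop
    exact hmeas.aestronglyMeasurable.mul hf.aestronglyMeasurable
  · have hden : 0 < x ^ 2 + ((k : ℝ) + 1 / 2) ^ 2 := by positivity
    rw [Real.norm_eq_abs, abs_mul, abs_div, abs_mul, abs_two, abs_of_pos hden]
  · simp_rw [(hbound _).tsum_eq]
    refine hf.abs.bdd_mul (c := π) (Continuous.aestronglyMeasurable ?_) (.of_forall fun x => ?_)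
    · exact continuous_const.mul (continuous_tanh.comp (by fun_prop))
    · rw [Real.norm_eq_abs, abs_mul, abs_of_pos pi_pos]
      exact mul_le_of_le_one_right pi_pos.le (Real.abs_tanh_lt_one _).le

section RationalIntegrals

variable {a b c : ℝ}

lemma hasDerivAt_arctan_div (ha : a ≠ 0) (x : ℝ) :
    HasDerivAt (fun x => Real.arctan (x / a)) (a / (x ^ 2 + a ^ 2)) x := by
  convert! ((hasDerivAt_id' x).div_const a).arctan using 1
  field_simp
  ring

lemma tendsto_arctan_div_atTop (ha : 0 < a) :
    Tendsto (fun x => Real.arctan (x / a)) atTop (nhds (π / 2)) :=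
  (tendsto_nhds_of_tendsto_nhdsWithin Real.tendsto_arctan_atTop).comp
    (tendsto_id.atTop_div_const ha)

lemma hasDerivAt_sq_add_sq (a x : ℝ) : HasDerivAt (fun x => x ^ 2 + a ^ 2) (2 * x) x := by
  simpa using (hasDerivAt_pow 2 x).add_const (a ^ 2)

lemma tendsto_div_sq_add_sq_atTop (a : ℝ) :
    Tendsto (fun x : ℝ => x / (x ^ 2 + a ^ 2)) atTop (nhds 0) := by
  refine squeeze_zero' ?_ ?_ tendsto_inv_atTop_zero
  · filter_upwards [eventually_gt_atTop 0] with x hx using by positivity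
  · filter_upwards [eventually_gt_atTop 0] with x hx
    rw [inv_eq_one_div, div_le_div_iff₀ (by positivity) hx]
    nlinarith [sq_nonneg a]

-- The two terms of the primitive for `a ≠ c` coalesce as `c → a`, whence the separate case.
lemma exists_primitive_sq_div_sq_add_sq_mul (ha : 0 < a) (hc : 0 < c) :
    ∃ G : ℝ → ℝ, (∀ x, HasDerivAt G (x ^ 2 / ((x ^ 2 + c ^ 2) * (x ^ 2 + a ^ 2))) x) ∧
      G 0 = 0 ∧ Tendsto G atTop (nhds (π / (2 * (a + c)))) := by
  rcases eq_or_ne a c with rfl | hac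
  · refine ⟨fun x => (Real.arctan (x / a) / a - x / (x ^ 2 + a ^ 2)) / 2, fun x => ?_, by simp, ?_⟩
    · convert! (((hasDerivAt_arctan_div ha.ne' x).div_const a).sub
        ((hasDerivAt_id' x).div (hasDerivAt_sq_add_sq a x) (by positivity))).div_const 2 using 1
      field_simp
      ring
    · convert! (((tendsto_arctan_div_atTop ha).div_const a).sub
        (tendsto_div_sq_add_sq_atTop a)).div_const 2 using 2
      field_simp
      ring
  · have hd : a ^ 2 - c ^ 2 ≠ 0 := by
      rw [sq_sub_sq]
      exact mul_ne_zero (by positivity) (sub_ne_zero.2 hac)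
    refine ⟨fun x => (a * Real.arctan (x / a) - c * Real.arctan (x / c)) / (a ^ 2 - c ^ 2),
      fun x => ?_, by simp, ?_⟩
    · convert! (((hasDerivAt_arctan_div ha.ne' x).const_mul a).sub
        ((hasDerivAt_arctan_div hc.ne' x).const_mul c)).div_const (a ^ 2 - c ^ 2) using 1
      field_simp
      ring
    · convert! (((tendsto_arctan_div_atTop ha).const_mul a).sub
        ((tendsto_arctan_div_atTop hc).const_mul c)).div_const (a ^ 2 - c ^ 2) using 2
      field_simp
      ring

lemma integrableOn_sq_div_sq_add_sq_mul (ha : 0 < a) (hc : 0 < c) :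
    IntegrableOn (fun x : ℝ => x ^ 2 / ((x ^ 2 + c ^ 2) * (x ^ 2 + a ^ 2))) (Set.Ioi 0) := by
  obtain ⟨G, hG, -, hlim⟩ := exists_primitive_sq_div_sq_add_sq_mul ha hc
  exact integrableOn_Ioi_deriv_of_nonneg' (fun x _ => hG x) (fun x _ => by positivity) hlim

lemma integral_Ioi_sq_div_sq_add_sq_mul (ha : 0 < a) (hc : 0 < c) :
    ∫ x in Set.Ioi (0 : ℝ), x ^ 2 / ((x ^ 2 + c ^ 2) * (x ^ 2 + a ^ 2)) = π / (2 * (a + c)) := by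
  obtain ⟨G, hG, hG0, hlim⟩ := exists_primitive_sq_div_sq_add_sq_mul ha hc
  rw [integral_Ioi_of_hasDerivAt_of_tendsto' (fun x _ => hG x)
    (integrableOn_sq_div_sq_add_sq_mul ha hc) hlim, hG0, sub_zero]

lemma hasDerivAt_half_log_sq_add_sq (ha : a ≠ 0) (x : ℝ) :
    HasDerivAt (fun x => Real.log (x ^ 2 + a ^ 2) / 2) (x / (x ^ 2 + a ^ 2)) x := by
  convert! ((hasDerivAt_sq_add_sq a x).log (by positivity)).div_const 2 using 1
  ring

lemma tendsto_half_log_sq_add_sq_sub_atTop (a b : ℝ) :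
    Tendsto (fun x : ℝ => Real.log (x ^ 2 + a ^ 2) / 2 - Real.log (x ^ 2 + b ^ 2) / 2)
      atTop (nhds 0) := by
  have hsq : Tendsto (fun x : ℝ => x ^ 2) atTop atTop := tendsto_pow_atTop two_ne_zero
  have hlog (c : ℝ) : Tendsto (fun x : ℝ => Real.log (x ^ 2 + c ^ 2) - Real.log (x ^ 2))
      atTop (nhds 0) :=
    (Real.tendsto_log_comp_add_sub_log (c ^ 2)).comp hsq
  convert! ((hlog a).sub (hlog b)).div_const 2 using 2 <;> ring

lemma integrableOn_div_sq_add_sq_sub (ha : 0 < a) (hb : 0 < b) :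
    IntegrableOn (fun x : ℝ => x / (x ^ 2 + a ^ 2) - x / (x ^ 2 + b ^ 2)) (Set.Ioi 0) := by
  have hderiv (x : ℝ) := (hasDerivAt_half_log_sq_add_sq ha.ne' x).sub
    (hasDerivAt_half_log_sq_add_sq hb.ne' x)
  have hlim := tendsto_half_log_sq_add_sq_sub_atTop a b
  rcases le_total a b with hab | hba
  · refine integrableOn_Ioi_deriv_of_nonneg' (fun x _ => hderiv x) (fun x hx => ?_) hlim
    have hx : 0 < x := hx
    rw [sub_nonneg]
    gcongr
  · refine integrableOn_Ioi_deriv_of_nonpos' (fun x _ => hderiv x) (fun x hx => ?_) hlim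
    have hx : 0 < x := hx
    rw [sub_nonpos]
    gcongr

lemma integral_Ioi_div_sq_add_sq_sub (ha : 0 < a) (hb : 0 < b) :
    ∫ x in Set.Ioi (0 : ℝ), (x / (x ^ 2 + a ^ 2) - x / (x ^ 2 + b ^ 2)) =
      Real.log b - Real.log a := by
  rw [integral_Ioi_of_hasDerivAt_of_tendsto'
    (fun x _ => (hasDerivAt_half_log_sq_add_sq ha.ne' x).sub
      (hasDerivAt_half_log_sq_add_sq hb.ne' x))
    (integrableOn_div_sq_add_sq_sub ha hb) (tendsto_half_log_sq_add_sq_sub_atTop a b)]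
  simp

lemma integral_Ioi_mul_div_sq_add_sq_sub (ha : 0 < a) (hb : 0 < b) (hc : 0 < c) :
    ∫ x in Set.Ioi (0 : ℝ),
        2 * x / (x ^ 2 + c ^ 2) * (x / (x ^ 2 + a ^ 2) - x / (x ^ 2 + b ^ 2)) =
      π * (1 / (a + c) - 1 / (b + c)) := by
  calc
    _ = ∫ x in Set.Ioi (0 : ℝ), 2 * (x ^ 2 / ((x ^ 2 + c ^ 2) * (x ^ 2 + a ^ 2)) -
          x ^ 2 / ((x ^ 2 + c ^ 2) * (x ^ 2 + b ^ 2))) := by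
      congr with x
      field_simp
    _ = 2 * (π / (2 * (a + c)) - π / (2 * (b + c))) := by
      rw [integral_const_mul, integral_sub (integrableOn_sq_div_sq_add_sq_mul ha hc)
        (integrableOn_sq_div_sq_add_sq_mul hb hc), integral_Ioi_sq_div_sq_add_sq_mul ha hc,
        integral_Ioi_sq_div_sq_add_sq_mul hb hc]
    _ = π * (1 / (a + c) - 1 / (b + c)) := by
      field_simp

end RationalIntegrals

section BinetKernel

variable {a b x z : ℝ}

lemma binetKernel_nonneg (z : ℝ) (hx : 0 ≤ x) : 0 ≤ binetKernel z x := by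
  unfold binetKernel
  positivity

lemma binetKernel_le (hz : 0 < z) (x : ℝ) :
    binetKernel z x ≤ 1 / (2 * z) * Real.exp (-(2 * π) * x) := by
  have hfrac : x / (x ^ 2 + z ^ 2) ≤ 1 / (2 * z) := by
    rw [div_le_div_iff₀ (by positivity) (by positivity)]
    linarith [two_mul_le_add_sq x z]
  calc
    binetKernel z x = x / (x ^ 2 + z ^ 2) * (Real.exp (2 * π * x) + 1)⁻¹ := by
      rw [binetKernel, div_mul_eq_div_div_swap, div_eq_mul_inv (_ / _)]
    _ ≤ 1 / (2 * z) * (Real.exp (2 * π * x))⁻¹ := by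
      gcongr
      linarith
    _ = 1 / (2 * z) * Real.exp (-(2 * π) * x) := by
      rw [neg_mul, Real.exp_neg]

lemma integrableOn_const_mul_exp_neg_two_pi_mul (c : ℝ) :
    IntegrableOn (fun x => c * Real.exp (-(2 * π) * x)) (Set.Ioi 0) :=
  (integrableOn_exp_mul_Ioi (neg_neg_of_pos two_pi_pos) 0).const_mul c

lemma integrableOn_binetKernel (hz : 0 < z) : IntegrableOn (binetKernel z) (Set.Ioi 0) := by
  refine (integrableOn_const_mul_exp_neg_two_pi_mul (1 / (2 * z))).mono' ?_ ?_
  · unfold binetKernel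
    exact Measurable.aestronglyMeasurable (by fun_prop)
  · filter_upwards [ae_restrict_mem measurableSet_Ioi] with x hx
    rw [Real.norm_of_nonneg (binetKernel_nonneg z hx.le)]
    exact binetKernel_le hz x

lemma integral_binetKernel_le (hz : 0 < z) :
    ∫ x in Set.Ioi 0, binetKernel z x ≤ 1 / (4 * π * z) := by
  calc
    ∫ x in Set.Ioi 0, binetKernel z x
      ≤ ∫ x in Set.Ioi 0, 1 / (2 * z) * Real.exp (-(2 * π) * x) :=
        setIntegral_mono_on (integrableOn_binetKernel hz)
          (integrableOn_const_mul_exp_neg_two_pi_mul _) measurableSet_Ioi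
          fun x _ => binetKernel_le hz x
    _ = 1 / (4 * π * z) := by
        rw [integral_const_mul, integral_exp_mul_Ioi (neg_neg_of_pos two_pi_pos)]
        simp only [mul_zero, Real.exp_zero]
        field_simp
        ring

lemma tendsto_integral_binetKernel_atTop :
    Tendsto (fun z => ∫ x in Set.Ioi 0, binetKernel z x) atTop (nhds 0) := by
  refine squeeze_zero' (g := fun z => 1 / (4 * π * z)) (.of_forall fun z => ?_) ?_ ?_
  · exact setIntegral_nonneg measurableSet_Ioi fun x hx => binetKernel_nonneg z hx.le
  · filter_upwards [eventually_gt_atTop 0] with z hz using integral_binetKernel_le hz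
  · exact (tendsto_id.const_mul_atTop (by positivity)).const_div_atTop 1

lemma tanh_mul_div_sq_add_sq (z x : ℝ) :
    Real.tanh (π * x) * (x / (x ^ 2 + z ^ 2)) = x / (x ^ 2 + z ^ 2) - 2 * binetKernel z x := by
  rw [tanh_eq_one_sub_two_div, binetKernel, div_mul_eq_div_div_swap, ← mul_assoc 2 π x]
  ring

lemma integral_Ioi_tanh_mul_div_sq_add_sq_sub (ha : 0 < a) (hb : 0 < b) :
    ∫ x in Set.Ioi (0 : ℝ),
        Real.tanh (π * x) * (x / (x ^ 2 + a ^ 2) - x / (x ^ 2 + b ^ 2)) =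
      (2 * (∫ x in Set.Ioi 0, binetKernel b x) + Real.log b) -
        (2 * (∫ x in Set.Ioi 0, binetKernel a x) + Real.log a) := by
  have hpoint (x : ℝ) : Real.tanh (π * x) * (x / (x ^ 2 + a ^ 2) - x / (x ^ 2 + b ^ 2)) =
      (x / (x ^ 2 + a ^ 2) - x / (x ^ 2 + b ^ 2)) -
        2 * (binetKernel a - binetKernel b) x := by
    rw [mul_sub, tanh_mul_div_sq_add_sq, tanh_mul_div_sq_add_sq, Pi.sub_apply]
    ring
  have hkernel := (integrableOn_binetKernel ha).sub (integrableOn_binetKernel hb)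
  simp_rw [hpoint]
  rw [integral_sub (integrableOn_div_sq_add_sq_sub ha hb) (hkernel.const_mul 2),
    integral_Ioi_div_sq_add_sq_sub ha hb, integral_const_mul,
    integral_sub' (integrableOn_binetKernel ha) (integrableOn_binetKernel hb)]
  ring

lemma hasSum_one_div_sub_one_div (ha : 0 < a) (hb : 0 < b) :
    HasSum (fun k : ℕ => 1 / (a + ((k : ℝ) + 1 / 2)) - 1 / (b + ((k : ℝ) + 1 / 2)))
      ((2 * (∫ x in Set.Ioi 0, binetKernel b x) + Real.log b) -
        (2 * (∫ x in Set.Ioi 0, binetKernel a x) + Real.log a)) := by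
  have hsum := hasSum_integral_pi_mul_tanh_mul (integrableOn_div_sq_add_sq_sub ha hb)
  simp_rw [mul_assoc π, integral_const_mul] at hsum
  rw [integral_Ioi_tanh_mul_div_sq_add_sq_sub ha hb] at hsum
  simp_rw [fun k : ℕ => integral_Ioi_mul_div_sq_add_sq_sub ha hb
    (by positivity : 0 < (k : ℝ) + 1 / 2)] at hsum
  exact (hasSum_mul_left_iff pi_ne_zero).1 hsum

lemma two_mul_integral_binetKernel_add_log_add_one (hz : 0 < z) :
    2 * (∫ x in Set.Ioi 0, binetKernel (z + 1) x) + Real.log (z + 1) =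
      2 * (∫ x in Set.Ioi 0, binetKernel z x) + Real.log z + 1 / (z + 1 / 2) := by
  have htelescope (n : ℕ) : ∑ k ∈ Finset.range n,
      (1 / (z + ((k : ℝ) + 1 / 2)) - 1 / (z + 1 + ((k : ℝ) + 1 / 2))) =
        1 / (z + 1 / 2) - 1 / (n + (z + 1 / 2)) := by
    convert! Finset.sum_range_sub' (fun k : ℕ => 1 / ((k : ℝ) + (z + 1 / 2))) n using 2 with k
    · push_cast
      ring
    · simp
  have hlim : Tendsto (fun n : ℕ => 1 / (z + 1 / 2) - 1 / (n + (z + 1 / 2))) atTop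
      (nhds (1 / (z + 1 / 2) - 0)) :=
    ((tendsto_atTop_add_const_right _ _ tendsto_natCast_atTop_atTop).const_div_atTop 1).const_sub _
  have hsum := (hasSum_one_div_sub_one_div hz (add_pos hz one_pos)).tendsto_sum_nat
  simp_rw [htelescope] at hsum
  linarith [tendsto_nhds_unique hsum hlim]

end BinetKernel

section Digamma

variable {x : ℝ}

lemma differentiableAt_log_Gamma (hx : 0 < x) :
    DifferentiableAt ℝ (fun t => Real.log (Real.Gamma t)) x :=
  (Real.differentiableOn_Gamma_Ioi.differentiableAt (Ioi_mem_nhds hx)).log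
    (Real.Gamma_pos_of_pos hx).ne'

lemma log_Gamma_add_one (hx : 0 < x) :
    Real.log (Real.Gamma (x + 1)) = Real.log (Real.Gamma x) + Real.log x := by
  rw [Real.Gamma_add_one hx.ne', Real.log_mul hx.ne' (Real.Gamma_pos_of_pos hx).ne', add_comm]

lemma digamma_add_one (hx : 0 < x) : digamma (x + 1) = digamma x + 1 / x := by
  have hrec : (fun t => Real.log (Real.Gamma (t + 1))) =ᶠ[nhds x]
      fun t => Real.log (Real.Gamma t) + Real.log t := by
    filter_upwards [lt_mem_nhds hx] with t ht using log_Gamma_add_one ht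
  rw [digamma, ← deriv_comp_add_const, hrec.deriv_eq,
    deriv_fun_add (differentiableAt_log_Gamma hx) (Real.differentiableAt_log hx.ne'),
    Real.deriv_log, one_div, digamma]

lemma slope_log_Gamma_add_one (hx : 0 < x) :
    slope (Real.log ∘ Real.Gamma) x (x + 1) = Real.log x := by
  simp [slope_def_field, log_Gamma_add_one hx]

lemma digamma_le_log (hx : 0 < x) : digamma x ≤ Real.log x := by
  rw [← slope_log_Gamma_add_one hx]
  exact Real.convexOn_log_Gamma.deriv_le_slope hx (add_pos hx one_pos) (lt_add_one x)
    (differentiableAt_log_Gamma hx)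

lemma log_le_digamma_add_one (hx : 0 < x) : Real.log x ≤ digamma (x + 1) := by
  rw [← slope_log_Gamma_add_one hx]
  exact Real.convexOn_log_Gamma.slope_le_deriv hx (add_pos hx one_pos) (lt_add_one x)
    (differentiableAt_log_Gamma (add_pos hx one_pos))

lemma tendsto_digamma_sub_log_atTop :
    Tendsto (fun x => digamma x - Real.log x) atTop (nhds 0) := by
  have hinv : Tendsto (fun x : ℝ => -(1 / x)) atTop (nhds 0) := by
    simpa using (tendsto_inv_atTop_zero (𝕜 := ℝ)).neg
  refine tendsto_of_tendsto_of_tendsto_of_le_of_le' hinv tendsto_const_nhds ?_ ?_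
  · filter_upwards [eventually_gt_atTop 0] with x hx
    linarith [log_le_digamma_add_one hx, digamma_add_one hx]
  · filter_upwards [eventually_gt_atTop 0] with x hx
    exact sub_nonpos.2 (digamma_le_log hx)

lemma eq_digamma_of_forall_succ_of_tendsto (hx : 0 < x) {u : ℕ → ℝ}
    (hsucc : ∀ n : ℕ, u (n + 1) = u n + 1 / (x + n))
    (hlim : Tendsto (fun n : ℕ => u n - Real.log (x + n)) atTop (nhds 0)) :
    u 0 = digamma x := by
  have hconst (n : ℕ) : u n - digamma (x + n) = u 0 - digamma x := by
    induction n with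
    | zero => simp
    | succ n ih =>
      rw [hsucc, Nat.cast_succ, ← add_assoc, digamma_add_one (by positivity), ← ih]
      ring
  have hdigamma : Tendsto (fun n : ℕ => digamma (x + n) - Real.log (x + n)) atTop (nhds 0) :=
    tendsto_digamma_sub_log_atTop.comp
      (tendsto_atTop_add_const_left _ _ tendsto_natCast_atTop_atTop)
  have hdiff := hlim.sub hdigamma
  simp_rw [sub_sub_sub_cancel_right, hconst, sub_zero] at hdiff
  exact sub_eq_zero.1 (tendsto_nhds_unique tendsto_const_nhds hdiff)

end Digamma

/-- 2 ∫₀^∞ x/((e^{2πx}+1)(x²+z²)) dx = ψ(z+1/2) − log z, z > 0. -/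
theorem integral_x_div_exp_add_one (z : ℝ) (hz : 0 < z) :
    2 * (∫ x in Set.Ioi (0 : ℝ), x / ((Real.exp (2 * π * x) + 1) * (x ^ 2 + z ^ 2))) =
      digamma (z + 1 / 2) - Real.log z := by
  let u : ℝ → ℝ := fun w => 2 * (∫ x in Set.Ioi 0, binetKernel w x) + Real.log w
  have hsucc (n : ℕ) : u (z + (n + 1 : ℕ)) = u (z + n) + 1 / (z + 1 / 2 + n) := by
    rw [Nat.cast_succ, ← add_assoc, add_right_comm z (1 / 2)]
    exact two_mul_integral_binetKernel_add_log_add_one (by positivity)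
  have hlim : Tendsto (fun w => u w - Real.log (w + 1 / 2)) atTop (nhds 0) := by
    have hsum := (tendsto_integral_binetKernel_atTop.const_mul 2).sub
      (Real.tendsto_log_comp_add_sub_log (1 / 2))
    rw [mul_zero, sub_zero] at hsum
    exact hsum.congr fun w => by ring
  have hlim_nat : Tendsto (fun n : ℕ => u (z + n) - Real.log (z + 1 / 2 + n)) atTop (nhds 0) := by
    simp_rw [add_right_comm z (1 / 2)]
    exact hlim.comp (tendsto_atTop_add_const_left _ _ tendsto_natCast_atTop_atTop)
  have hu : u (z + (0 : ℕ)) = digamma (z + 1 / 2) :=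
    eq_digamma_of_forall_succ_of_tendsto (by positivity) (u := fun n => u (z + n)) hsucc hlim_nat
  rw [Nat.cast_zero, add_zero] at hu
  exact eq_sub_of_add_eq hu
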